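/- arXiv:1412.2737 — 3 statements merged into one kernel-verified Lean document; each statement's English description precedes it below -/
import Mathlib

section
/- For every rational number q = m/n ∈ (0,1/2) in lowest terms, the word c_q 0 (of length n+2) is primitive, i.e. it is not a power of a strictly shorter word; equivalently, the periodic sequence (c_q 0)^∞ has least period n+2. The same holds for the word c_q 1. -/
/-!
Identify bit `i` of `c_{m/n}` with the existence of a crossing `kn/m` (`0 ≤ k ≤ m`) in `(i-1, i+1)`.
By coprimality the only integral crossings are `0` and `n`, so every other crossing produces two
adjacent `1`s, and consecutive crossings are more than `2` apart. Hence, inside the word `c_q`,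
there is no isolated `1` at a position `0 < i < n` (`nbtBit_not_isolated`) and no run of exactly
three `1`s (`nbtBit_no_triple`), while `c_q` starts with `10` and ends with `01`.

Cyclically, `c_q 0` therefore has isolated `1`s exactly at positions `0` and `n`, and `c_q 1` has the
block `01110` exactly once, centred at its last letter. A period `d < n + 2` would have to preserve
these sets of positions, which is impossible.
-/


/-- The sequence `u^∞ : ℕ → Bool`, the infinite repetition of the finite word `u`. -/
def periodicSeq (u : List Bool) : ℕ → Bool := fun n => u.getD (n % u.length) false

/-- The sequence given by the finite word `u` followed by the infinite tail `t`. -/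
def wordSeq (u : List Bool) (t : ℕ → Bool) : ℕ → Bool :=
  fun n => if h : n < u.length then u.get ⟨n, h⟩ else t (n - u.length)

/-- The sequence `0^∞` of all zeros. -/
def zeroSeq : ℕ → Bool := fun _ => false

/-- `s >₁ t` in the unimodal order: at the least index `k` where they differ,
`s k > t k` if the number of 1's before `k` is even, and `s k < t k` otherwise. -/
def unimodalGT (s t : ℕ → Bool) : Prop :=
  ∃ k : ℕ, (∀ i < k, s i = t i) ∧ s k ≠ t k ∧
    (if Even (((Finset.range k).filter (fun i => s i = true)).card)
      then s k = true else t k = true)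

/-- `s ≥₁ t` in the unimodal order. -/
def unimodalGE (s t : ℕ → Bool) : Prop := s = t ∨ unimodalGT s t

/-- `s ≤₁ t` in the unimodal order. -/
def unimodalLE (s t : ℕ → Bool) : Prop := s = t ∨ unimodalGT t s

/-- A finite word `u` is a maximal code if `σ^i(u^∞) ≤₁ u^∞` for all `i ≥ 1`. -/
def maximalCode (u : List Bool) : Prop :=
  ∀ i ≥ 1, unimodalLE (fun n => periodicSeq u (n + i)) (periodicSeq u)

/-- A finite word `w` is a maximal decoration if both `w0` and `w1` are maximal codes. -/
def maximalDecoration (w : List Bool) : Prop :=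
  maximalCode (w ++ [false]) ∧ maximalCode (w ++ [true])

/-- The `i`-th symbol of the NBT code of `m/n`: it is `1` iff the segment from `(0,0)` to
`(n,m)` meets a horizontal line `y = k`, `k ∈ ℤ`, at a point with x-coordinate in `(i-1,i+1)`;
equivalently iff there is `0 ≤ k ≤ m` with `m(i-1) < kn < m(i+1)`. -/
def nbtBit (m n i : ℕ) : Bool :=
  decide (∃ k : Fin (m + 1),
    (m : ℤ) * ((i : ℤ) - 1) < ((k : ℕ) : ℤ) * (n : ℤ) ∧
      ((k : ℕ) : ℤ) * (n : ℤ) < (m : ℤ) * ((i : ℤ) + 1))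

/-- The NBT code `c_q = s₀s₁⋯s_n` of `q = m/n`. -/
def nbtCode (m n : ℕ) : List Bool := List.ofFn (fun i : Fin (n + 1) => nbtBit m n i)

/-- The NBT code of a rational number `q`, written in lowest terms. -/
def nbtCodeQ (q : ℚ) : List Bool := nbtCode q.num.toNat q.den

lemma nbtBit_eq_true_iff (m n i : ℕ) : nbtBit m n i = true ↔
    ∃ k : ℕ, k ≤ m ∧ (m : ℤ) * ((i : ℤ) - 1) < (k : ℤ) * n ∧
      (k : ℤ) * n < (m : ℤ) * ((i : ℤ) + 1) := by
  simp only [nbtBit, decide_eq_true_eq]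
  constructor
  · rintro ⟨k, h⟩
    exact ⟨k, by omega, h⟩
  · rintro ⟨k, hk, h⟩
    exact ⟨⟨k, by omega⟩, h⟩

/-- The segment crosses integral heights at integral abscissae only at its endpoints. -/
lemma crossing_ne {m n : ℕ} (hm : 0 < m) (hco : Nat.Coprime m n) {k i : ℕ} (hk : k ≤ m)
    (hi : 0 < i) (hin : i < n) : (k : ℤ) * n ≠ (m : ℤ) * i := by
  intro h
  have h' : k * n = m * i := by exact_mod_cast h
  have hdvd : m ∣ k := hco.dvd_of_dvd_mul_right ⟨i, h'⟩
  rcases Nat.eq_zero_or_pos k with rfl | hk0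
  · have : 0 < m * i := Nat.mul_pos hm hi
    omega
  · have hkm : k = m := le_antisymm hk (Nat.le_of_dvd hk0 hdvd)
    subst hkm
    have := Nat.eq_of_mul_eq_mul_left hm h'
    omega

lemma nbtBit_zero {m n : ℕ} (hm : 0 < m) : nbtBit m n 0 = true := by
  rw [nbtBit_eq_true_iff]
  exact ⟨0, by omega, by simp; omega, by simp; omega⟩

lemma nbtBit_last {m n : ℕ} (hm : 0 < m) : nbtBit m n n = true := by
  rw [nbtBit_eq_true_iff]
  exact ⟨m, le_rfl, by nlinarith, by nlinarith⟩

lemma nbtBit_one {m n : ℕ} (hn : 2 * m < n) : nbtBit m n 1 = false := by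
  rw [Bool.eq_false_iff, Ne, nbtBit_eq_true_iff]
  rintro ⟨k, -, h1, h2⟩
  push_cast at h1 h2
  have hk : 1 ≤ k := by
    rcases Nat.eq_zero_or_pos k with rfl | h
    · simp at h1
    · exact h
  nlinarith

lemma nbtBit_penultimate {m n i : ℕ} (hn : 2 * m < n) (hi : i + 1 = n) :
    nbtBit m n i = false := by
  rw [Bool.eq_false_iff, Ne, nbtBit_eq_true_iff]
  rintro ⟨k, hk, h1, h2⟩
  obtain rfl : n = i + 1 := hi.symm
  push_cast at h1 h2
  rcases hk.eq_or_lt with rfl | hlt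
  · exact lt_irrefl _ h2
  · zify at hlt hn
    nlinarith

lemma nbtBit_not_isolated {m n : ℕ} (hm : 0 < m) (hco : Nat.Coprime m n) {i : ℕ}
    (hin : i + 1 < n) (h : nbtBit m n (i + 1) = true) :
    nbtBit m n i = true ∨ nbtBit m n (i + 2) = true := by
  simp only [nbtBit_eq_true_iff] at *
  obtain ⟨k, hk, h1, h2⟩ := h
  have hne := crossing_ne hm hco hk (Nat.succ_pos i) hin
  push_cast at h1 h2 hne ⊢
  rcases lt_or_gt_of_ne hne with hlt | hgt
  · exact Or.inl ⟨k, hk, by linarith, by linarith⟩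
  · exact Or.inr ⟨k, hk, by linarith, by linarith⟩

/-- A block `01?10` would put two crossings, on either side of its centre, at distance less
than `2`, whereas distinct crossings are at distance at least `n/m > 2`. -/
lemma nbtBit_no_triple {m n : ℕ} (hm : 0 < m) (hn : 2 * m < n) (hco : Nat.Coprime m n) {i : ℕ}
    (hin : i + 4 ≤ n) (h0 : nbtBit m n i = false) (h1 : nbtBit m n (i + 1) = true)
    (h3 : nbtBit m n (i + 3) = true) (h4 : nbtBit m n (i + 4) = false) : False := by
  rw [Bool.eq_false_iff, Ne, nbtBit_eq_true_iff] at h0 h4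
  rw [nbtBit_eq_true_iff] at h1 h3
  obtain ⟨a, ha, ha1, ha2⟩ := h1
  obtain ⟨c, hc, hc1, hc2⟩ := h3
  have hane := crossing_ne hm hco ha (Nat.succ_pos i) (by omega)
  have hcne := crossing_ne hm hco hc (Nat.succ_pos (i + 2)) (by omega)
  push_cast at *
  have ha3 : (m : ℤ) * (i + 1) < a * n := by
    by_contra hlt
    exact h0 ⟨a, ha, by linarith, lt_of_le_of_ne (not_lt.mp hlt) hane⟩
  have hc3 : (c : ℤ) * n < m * (i + 3) := by
    by_contra hlt
    have hgt := lt_of_le_of_ne (not_lt.mp hlt) (fun h => hcne (by linarith))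
    exact h4 ⟨c, hc, by linarith, by linarith⟩
  have hac : (a : ℤ) < c := by
    by_contra hle
    nlinarith
  zify at hn
  nlinarith

lemma periodicSeq_nbt_eq (m n : ℕ) (e : Bool) {j : ℕ} (hj : j ≤ n) :
    periodicSeq (nbtCode m n ++ [e]) j = nbtBit m n j := by
  have hlen : (nbtCode m n).length = n + 1 := by simp [nbtCode]
  have hmod : j % (n + 2) = j := Nat.mod_eq_of_lt (by omega)
  simp only [periodicSeq, List.length_append, hlen, List.length_singleton, hmod]
  rw [List.getD_append _ _ _ _ (by omega), List.getD_eq_getElem _ _ (by omega)]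
  simp only [nbtCode, List.getElem_ofFn]

lemma periodicSeq_nbt_last (m n : ℕ) (e : Bool) :
    periodicSeq (nbtCode m n ++ [e]) (n + 1) = e := by
  have hlen : (nbtCode m n).length = n + 1 := by simp [nbtCode]
  have hmod : (n + 1) % (n + 2) = n + 1 := Nat.mod_eq_of_lt (by omega)
  simp only [periodicSeq, List.length_append, hlen, List.length_singleton, hmod]
  rw [List.getD_append_right _ _ _ _ (by omega)]
  simp [hlen]

lemma periodicSeq_nbt_periodic (m n : ℕ) (e : Bool) :
    Function.Periodic (periodicSeq (nbtCode m n ++ [e])) (n + 2) := by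
  intro j
  have hlen : (nbtCode m n ++ [e]).length = n + 2 := by simp [nbtCode]
  simp only [periodicSeq, hlen, Nat.add_mod_right]

/-- for `q = m/n ∈ (0,1/2)` in lowest terms, the words `c_q 0` and `c_q 1`
(of length `n+2`) are primitive: the periodic sequences `(c_q 0)^∞` and `(c_q 1)^∞` have
least period `n + 2`. -/
theorem nbt_word_primitive (m n : ℕ) (hm : 0 < m) (hn : 2 * m < n)
    (hco : Nat.Coprime m n) :
    IsLeast {d : ℕ | 0 < d ∧
        Function.Periodic (periodicSeq (nbtCode m n ++ [false])) d} (n + 2) ∧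
    IsLeast {d : ℕ | 0 < d ∧
        Function.Periodic (periodicSeq (nbtCode m n ++ [true])) d} (n + 2) := by
  obtain ⟨p, rfl⟩ : ∃ p, n = p + 3 := ⟨n - 3, by omega⟩
  have b0 := nbtBit_zero (n := p + 3) hm
  have b1 := nbtBit_one hn
  have bp := nbtBit_penultimate hn (i := p + 2) rfl
  have bn := nbtBit_last (n := p + 3) hm
  refine ⟨⟨⟨by omega, periodicSeq_nbt_periodic _ _ _⟩, ?_⟩,
    ⟨⟨by omega, periodicSeq_nbt_periodic _ _ _⟩, ?_⟩⟩
  · rintro d ⟨hd, hper⟩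
    by_contra hlt
    have hb := fun j (hj : j ≤ p + 3) => periodicSeq_nbt_eq m (p + 3) false hj
    have hl := periodicSeq_nbt_last m (p + 3) false
    have hP := periodicSeq_nbt_periodic m (p + 3) false
    generalize periodicSeq (nbtCode m (p + 3) ++ [false]) = f at *
    obtain ⟨i, rfl⟩ : ∃ i, d = i + 1 := ⟨d - 1, by omega⟩
    -- The isolated `1` at position `0` is translated to position `d = i + 1`.
    have e0 : f i = false := by
      rw [← hP i, ← hl, ← hper (p + 3 + 1)]; congr 1; ring
    have e1 : f (i + 1) = true := by
      rw [← b0, ← hb 0 (by omega), ← hper 0]; congr 1; ring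
    have e2 : f (i + 2) = false := by
      rw [← b1, ← hb 1 (by omega), ← hper 1]; congr 1; ring
    rcases lt_trichotomy i (p + 2) with hi | rfl | hi
    · rw [hb _ (by omega)] at e0 e1 e2
      have := nbtBit_not_isolated hm hco (i := i) (by omega) e1
      simp [e0, e2] at this
    · -- Now `d = n`, and the isolated `1` at position `n` is translated to position `n - 2`.
      have g0 : f p = false := by
        rw [← bp, ← hb (p + 2) (by omega), ← hper (p + 2), ← hP p]; congr 1; ring
      have g1 : f (p + 1) = true := by
        rw [← bn, ← hb (p + 3) (by omega), ← hper (p + 3), ← hP (p + 1)]; congr 1; ring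
      rw [hb _ (by omega)] at g0 g1
      have := nbtBit_not_isolated hm hco (i := p) (by omega) g1
      simp [g0, bp] at this
    · obtain rfl : i = p + 3 := by omega
      rw [hl] at e1
      exact Bool.noConfusion e1
  · rintro d ⟨hd, hper⟩
    by_contra hlt
    have hb := fun j (hj : j ≤ p + 3) => periodicSeq_nbt_eq m (p + 3) true hj
    have hl := periodicSeq_nbt_last m (p + 3) true
    have hP := periodicSeq_nbt_periodic m (p + 3) true
    generalize periodicSeq (nbtCode m (p + 3) ++ [true]) = f at *
    -- The block `01110` centred at `n + 1` is translated to one centred at `d - 1`.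
    have hcases : d = 1 ∨ d = 2 ∨ d = p + 3 ∨ d = p + 4 ∨ (3 ≤ d ∧ d ≤ p + 2) := by
      simp only [not_le] at hlt
      omega
    have e3 : f d = true := by
      rw [← b0, ← hb 0 (by omega), ← hper 0]; congr 1; ring
    have e2 : f (p + 4 + d) = true := by rw [hper]; exact hl
    have e1 : f (p + 3 + d) = true := by rw [hper, hb _ le_rfl]; exact bn
    have e0 : f (p + 2 + d) = false := by rw [hper, hb _ (by omega)]; exact bp
    have e4 : f (1 + d) = false := by rw [hper, hb _ (by omega)]; exact b1
    rcases hcases with rfl | rfl | rfl | rfl | ⟨h3, hd2⟩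
    · rw [hb _ (by omega), b1] at e3
      exact Bool.noConfusion e3
    · rw [show p + 4 + 2 = 1 + (p + 3 + 2) by ring, hP, hb _ (by omega), b1] at e2
      exact Bool.noConfusion e2
    · rw [show p + 4 + (p + 3) = (p + 2) + (p + 3 + 2) by ring, hP, hb _ (by omega), bp] at e2
      exact Bool.noConfusion e2
    · rw [show p + 3 + (p + 4) = (p + 2) + (p + 3 + 2) by ring, hP, hb _ (by omega), bp] at e1
      exact Bool.noConfusion e1
    · obtain ⟨i, rfl⟩ : ∃ i, d = i + 3 := ⟨d - 3, by omega⟩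
      rw [show p + 2 + (i + 3) = i + (p + 3 + 2) by ring, hP, hb _ (by omega)] at e0
      rw [show p + 3 + (i + 3) = (i + 1) + (p + 3 + 2) by ring, hP, hb _ (by omega)] at e1
      rw [hb _ (by omega)] at e3
      rw [show 1 + (i + 3) = i + 4 by ring, hb _ (by omega)] at e4
      exact nbtBit_no_triple hm hn hco (by omega) e0 e1 e3 e4
end

section
/- For all rational numbers q, q' ∈ (0,1/2): q ≤ q' if and only if the sequence c_{q'} 0^∞ (the word c_{q'} followed by infinitely many 0's) is less than or equal to the sequence c_q 0^∞ in the unimodal order. In particular, if q < q' then c_q 0^∞ >₁ c_{q'} 0^∞. -/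
/-- The tail of zeros is already built into the arithmetic condition defining `nbtBit`. -/
lemma wordSeq_nbtCode (m n : ℕ) : wordSeq (nbtCode m n) zeroSeq = nbtBit m n := by
  funext i
  unfold wordSeq
  split_ifs with h
  · simp [nbtCode, -List.ofFn_succ]
  · simp only [nbtCode, List.length_ofFn] at h
    symm
    simp only [zeroSeq, nbtBit, decide_eq_false_iff_not]
    rintro ⟨k, h1, -⟩
    have hk : ((k : ℕ) : ℤ) ≤ m := by have := k.2; omega
    have hi : (n : ℤ) ≤ (i : ℤ) - 1 := by omega
    have h2 : ((k : ℕ) : ℤ) * n ≤ m * n := by gcongr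
    have h3 : (m : ℤ) * n ≤ m * ((i : ℤ) - 1) := by gcongr
    omega

/-- The ones of `c_{m/n} 0^∞` are at `0`, at the pairs `⌊jn/m⌋, ⌊jn/m⌋ + 1` for `0 < j < m`, and
at `⌊mn/m⌋ = n`. -/
lemma nbtBit_iff {m n : ℕ} (hm : 0 < m) (hc : Nat.Coprime m n) (i : ℕ) :
    nbtBit m n i = true ↔
      i = 0 ∨ ∃ j, 0 < j ∧ j ≤ m ∧ (i = j * n / m ∨ (j < m ∧ i = j * n / m + 1)) := by
  simp only [nbtBit, decide_eq_true_eq]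
  constructor
  · rintro ⟨⟨k, hk⟩, h1, h2⟩
    simp only at h1 h2
    rcases Nat.eq_zero_or_pos i with hi | hi
    · exact Or.inl hi
    right
    obtain ⟨i, rfl⟩ : ∃ t, i = t + 1 := ⟨i - 1, by omega⟩
    have h1' : m * i < k * n := by zify; push_cast at h1; linarith
    have h2' : k * n < m * (i + 2) := by zify; push_cast at h2; linarith
    have hk0 : 0 < k := by
      rcases Nat.eq_zero_or_pos k with h | h
      · subst h; simp at h1'
      · exact h
    refine ⟨k, hk0, by omega, ?_⟩
    rcases lt_or_ge (k * n) (m * (i + 1)) with h | h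
    · right
      refine ⟨lt_of_le_of_ne (by omega) ?_, ?_⟩
      · rintro rfl
        have a := Nat.lt_of_mul_lt_mul_left h1'
        have b := Nat.lt_of_mul_lt_mul_left h
        omega
      · congr 1
        symm
        apply Nat.div_eq_of_lt_le <;> nlinarith
    · left
      symm
      apply Nat.div_eq_of_lt_le <;> nlinarith
  · rintro (rfl | ⟨j, hj0, hjm, h⟩)
    · exact ⟨⟨0, by omega⟩, by simp; omega, by simp; omega⟩
    refine ⟨⟨j, by omega⟩, ?_⟩
    have hd := Nat.div_add_mod (j * n) m
    have hr := Nat.mod_lt (j * n) hm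
    set a := j * n / m
    set r := j * n % m with hrdef
    simp only
    have hd' : (j : ℤ) * n = m * a + r := by exact_mod_cast hd.symm
    rcases h with rfl | ⟨hlt, rfl⟩
    · rw [hd']
      constructor <;> (ring_nf; omega)
    · have hr0 : 0 < r := by
        rw [Nat.pos_iff_ne_zero]
        intro h0
        have : m ∣ j * n := Nat.dvd_of_mod_eq_zero h0
        have := Nat.le_of_dvd hj0 (hc.dvd_of_dvd_mul_right this)
        omega
      rw [hd']
      push_cast
      constructor <;> (ring_nf; omega)

lemma floor_gap {m n : ℕ} (hm : 0 < m) (h2 : 2 * m < n) {i j : ℕ} (hij : i < j) :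
    i * n / m + 2 ≤ j * n / m := by
  have h : i * n + 2 * m ≤ j * n := by nlinarith
  calc i * n / m + 2 = (i * n + 2 * m) / m := by rw [Nat.add_mul_div_right _ _ hm]
    _ ≤ j * n / m := Nat.div_le_div_right h

/-- Ones come in pairs after the initial one, so the number of ones before a positive index `i + 1`
is even exactly when that index is the second half of a pair. -/
lemma even_ones_iff {m n : ℕ} (hm : 0 < m) (h2 : 2 * m < n) (hc : Nat.Coprime m n) (i : ℕ)
    (hi : i + 1 ≤ n) :
    Even (((Finset.range (i + 1)).filter (fun t => nbtBit m n t = true)).card) ↔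
      ∃ j, 0 < j ∧ j < m ∧ i = j * n / m := by
  induction i with
  | zero =>
    have h0 : nbtBit m n 0 = true := (nbtBit_iff hm hc 0).2 (Or.inl rfl)
    simp only [zero_add, Finset.range_one, Finset.filter_singleton, h0, if_true,
      Finset.card_singleton]
    constructor
    · intro h; simp at h
    · rintro ⟨j, hj, -, h⟩
      have := floor_gap hm h2 hj
      rw [zero_mul, Nat.zero_div] at this
      omega
  | succ i ih =>
    specialize ih (by omega)
    have hmn : m * n / m = n := Nat.mul_div_cancel_left n hm
    rw [Finset.range_add_one, Finset.filter_insert]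
    by_cases hs : nbtBit m n (i + 1) = true
    · rw [if_pos hs, Finset.card_insert_of_notMem (by simp), Nat.even_add_one, ih]
      obtain h | ⟨j, hj0, hjm, h⟩ := (nbtBit_iff hm hc _).1 hs
      · omega
      have hjlt : j < m := by
        rcases h with h | h
        · refine lt_of_le_of_ne hjm ?_
          rintro rfl
          omega
        · exact h.1
      constructor
      · intro hno
        refine ⟨j, hj0, hjlt, ?_⟩
        rcases h with h | h
        · exact h
        · exact absurd ⟨j, hj0, hjlt, by omega⟩ hno
      · rintro ⟨k, hk0, hkm, hk⟩ ⟨l, hl0, hlm, hl⟩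
        rcases lt_trichotomy k l with hkl | rfl | hkl
        · have := floor_gap hm h2 hkl; omega
        · omega
        · have := floor_gap hm h2 hkl; omega
    · rw [if_neg hs, ih]
      rw [nbtBit_iff hm hc] at hs
      push Not at hs
      constructor
      · rintro ⟨j, hj0, hjm, h⟩
        have := (hs.2 j hj0 hjm.le).2 hjm
        omega
      · rintro ⟨j, hj0, hjm, h⟩
        have := (hs.2 j hj0 hjm.le).1
        omega

lemma filter_range_congr {s t : ℕ → Bool} {k : ℕ} (h : ∀ i < k, s i = t i) :
    (Finset.range k).filter (fun i => s i = true) =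
      (Finset.range k).filter (fun i => t i = true) := by
  apply Finset.filter_congr
  intro i hi
  rw [h i (Finset.mem_range.1 hi)]

lemma unimodalGT_asymm {s t : ℕ → Bool} (h1 : unimodalGT s t) (h2 : unimodalGT t s) : False := by
  obtain ⟨k, hk, hne, hp⟩ := h1
  obtain ⟨l, hl, hne', hp'⟩ := h2
  rcases lt_trichotomy k l with h | rfl | h
  · exact hne (hl k h).symm
  · rw [filter_range_congr hl] at hp'
    split_ifs at hp hp' <;> simp_all
  · exact hne' (hk l h).symm

/-- If `m/n < m'/n'`, given in lowest terms and in `(0, 1/2)`, then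
`c_{m/n} 0^∞ >₁ c_{m'/n'} 0^∞`. -/
lemma unimodalGT_nbtBit {m n m' n' : ℕ} (hm : 0 < m) (h2 : 2 * m < n) (hc : Nat.Coprime m n)
    (hm' : 0 < m') (h2' : 2 * m' < n') (hc' : Nat.Coprime m' n') (hlt : m * n' < m' * n) :
    unimodalGT (nbtBit m n) (nbtBit m' n') := by
  have hmn : m * n / m = n := Nat.mul_div_cancel_left n hm
  have hmn' : m' * n' / m' = n' := Nat.mul_div_cancel_left n' hm'
  have hle : ∀ j, j * n' / m' ≤ j * n / m := by
    intro j
    rw [Nat.le_div_iff_mul_le hm]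
    have h := Nat.div_mul_le_self (j * n') m'
    set b := j * n' / m'
    have : m' * (b * m) ≤ m' * (j * n) := by nlinarith
    exact Nat.le_of_mul_le_mul_left this hm'
  by_cases hex : ∃ k, 0 < k ∧ k ≤ m ∧ k ≤ m' ∧ k * n' / m' < k * n / m
  · classical
    -- the least pair whose position differs
    obtain ⟨k, ⟨hk0, hkm, hkm', hk⟩, hmin⟩ :
        ∃ k, (0 < k ∧ k ≤ m ∧ k ≤ m' ∧ k * n' / m' < k * n / m) ∧
          ∀ j < k, ¬ (0 < j ∧ j ≤ m ∧ j ≤ m' ∧ j * n' / m' < j * n / m) :=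
      ⟨Nat.find hex, Nat.find_spec hex, fun j hj => Nat.find_min hex hj⟩
    have heq : ∀ j, 0 < j → j < k → j * n' / m' = j * n / m := by
      intro j hj0 hjk
      have h := hmin j hjk
      have := hle j
      by_contra hne
      exact h ⟨hj0, by omega, by omega, by omega⟩
    have hmono : ∀ j, k ≤ j → k * n / m ≤ j * n / m := fun j hj =>
      Nat.div_le_div_right (Nat.mul_le_mul_right n hj)
    have hmono' : ∀ j, k ≤ j → k * n' / m' ≤ j * n' / m' := fun j hj =>
      Nat.div_le_div_right (Nat.mul_le_mul_right n' hj)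
    have hagree : ∀ i < k * n' / m', nbtBit m n i = nbtBit m' n' i := by
      intro i hi
      rw [Bool.eq_iff_iff, nbtBit_iff hm hc, nbtBit_iff hm' hc']
      apply or_congr Iff.rfl
      constructor
      · rintro ⟨j, hj0, hjm, h⟩
        have hjk : j < k := by
          by_contra hge
          have := hmono j (by omega)
          omega
        refine ⟨j, hj0, by omega, ?_⟩
        rw [heq j hj0 hjk]
        omega
      · rintro ⟨j, hj0, hjm, h⟩
        have hjk : j < k := by
          by_contra hge
          have := hmono' j (by omega)
          omega
        refine ⟨j, hj0, by omega, ?_⟩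
        rw [← heq j hj0 hjk]
        omega
    have hs' : nbtBit m' n' (k * n' / m') = true :=
      (nbtBit_iff hm' hc' _).2 (Or.inr ⟨k, hk0, hkm', Or.inl rfl⟩)
    have hpos : 2 ≤ k * n' / m' := by
      have := floor_gap hm' h2' hk0
      rw [zero_mul, Nat.zero_div] at this
      omega
    have hs : ¬ nbtBit m n (k * n' / m') = true := by
      rw [nbtBit_iff hm hc]
      rintro (h | ⟨j, hj0, hjm, h⟩)
      · omega
      · rcases lt_or_ge j k with hjk | hjk
        · have := floor_gap hm' h2' hjk
          have := heq j hj0 hjk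
          omega
        · have := hmono j hjk
          omega
    refine ⟨k * n' / m', hagree, fun h => hs (h.trans hs'), ?_⟩
    split_ifs with he
    · exfalso
      rw [filter_range_congr hagree] at he
      have hkn : k * n' / m' ≤ n' := by
        conv_rhs => rw [← hmn']
        exact Nat.div_le_div_right (Nat.mul_le_mul_right n' hkm')
      obtain ⟨b, hb⟩ : ∃ b, k * n' / m' = b + 1 := ⟨k * n' / m' - 1, by omega⟩
      rw [hb, even_ones_iff hm' h2' hc' b (by omega)] at he
      obtain ⟨j, hj0, hjm, hj⟩ := he
      rcases lt_or_ge j k with hjk | hjk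
      · have := floor_gap hm' h2' hjk
        omega
      · have := hmono' j hjk
        omega
    · exact hs'
  · have heq : ∀ j, 0 < j → j ≤ m → j ≤ m' → j * n' / m' = j * n / m := by
      intro j hj0 hjm hjm'
      have := hle j
      by_contra hne
      exact hex ⟨j, hj0, hjm, hjm', by omega⟩
    have hmm : m' < m := by
      by_contra hge
      have h := heq m hm le_rfl (by omega)
      have : m * n' / m' < n := by
        rw [Nat.div_lt_iff_lt_mul hm']
        linarith
      omega
    have hn : m' * n / m = n' := by rw [← heq m' hm' hmm.le le_rfl, hmn']
    have hmono : ∀ j, m' < j → n' + 2 ≤ j * n / m := by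
      intro j hj
      have := floor_gap hm h2 hj
      omega
    have hagree : ∀ i < n' + 1, nbtBit m n i = nbtBit m' n' i := by
      intro i hi
      rw [Bool.eq_iff_iff, nbtBit_iff hm hc, nbtBit_iff hm' hc']
      apply or_congr Iff.rfl
      constructor
      · rintro ⟨j, hj0, hjm, h⟩
        have hjm' : j ≤ m' := by
          by_contra hge
          have := hmono j (by omega)
          omega
        refine ⟨j, hj0, hjm', ?_⟩
        rw [heq j hj0 hjm hjm']
        rcases h with h | h
        · exact Or.inl h
        · refine Or.inr ⟨lt_of_le_of_ne hjm' ?_, h.2⟩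
          rintro rfl
          omega
      · rintro ⟨j, hj0, hjm, h⟩
        refine ⟨j, hj0, by omega, ?_⟩
        rw [← heq j hj0 (by omega) hjm]
        omega
    have hs : nbtBit m n (n' + 1) = true :=
      (nbtBit_iff hm hc _).2 (Or.inr ⟨m', hm', hmm.le, Or.inr ⟨hmm, by omega⟩⟩)
    have hmono' : ∀ j, j < m' → j * n' / m' + 2 ≤ n' := by
      intro j hj
      have := floor_gap hm' h2' hj
      omega
    have hs' : ¬ nbtBit m' n' (n' + 1) = true := by
      rw [nbtBit_iff hm' hc']
      rintro (h | ⟨j, hj0, hjm, h⟩)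
      · omega
      · rcases hjm.lt_or_eq with hj | rfl
        · have := hmono' j hj
          omega
        · omega
    refine ⟨n' + 1, hagree, fun h => hs' (h.symm.trans hs), ?_⟩
    rw [if_pos]
    · exact hs
    rw [filter_range_congr hagree]
    have hlast : nbtBit m' n' n' = true :=
      (nbtBit_iff hm' hc' _).2 (Or.inr ⟨m', hm', le_rfl, Or.inl hmn'.symm⟩)
    rw [Finset.range_add_one, Finset.filter_insert, if_pos hlast,
      Finset.card_insert_of_notMem (by simp), Nat.even_add_one]
    obtain ⟨b, rfl⟩ : ∃ b, n' = b + 1 := ⟨n' - 1, by omega⟩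
    rw [even_ones_iff hm' h2' hc' b le_rfl]
    rintro ⟨j, hj0, hjm, hj⟩
    have := hmono' j hjm
    omega

lemma unimodalGT_nbtCodeQ {q q' : ℚ} (hq0 : 0 < q) (hq1 : q < 1 / 2)
    (hq'0 : 0 < q') (hq'1 : q' < 1 / 2) (h : q < q') :
    unimodalGT (wordSeq (nbtCodeQ q) zeroSeq) (wordSeq (nbtCodeQ q') zeroSeq) := by
  have key : ∀ r : ℚ, 0 < r → r < 1 / 2 → 0 < r.num.toNat ∧ 2 * r.num.toNat < r.den ∧
      Nat.Coprime r.num.toNat r.den ∧ (r.num.toNat : ℤ) = r.num := by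
    intro r h0 h1
    have hn := Rat.num_pos.2 h0
    have hcast : (r.num.toNat : ℤ) = r.num := Int.toNat_of_nonneg hn.le
    refine ⟨by omega, ?_, ?_, hcast⟩
    · rw [Rat.lt_iff] at h1
      norm_num at h1
      omega
    · have := r.reduced
      rwa [show r.num.natAbs = r.num.toNat by omega] at this
  obtain ⟨a1, a2, a3, a4⟩ := key q hq0 hq1
  obtain ⟨b1, b2, b3, b4⟩ := key q' hq'0 hq'1
  simp only [nbtCodeQ, wordSeq_nbtCode]
  refine unimodalGT_nbtBit a1 a2 a3 b1 b2 b3 ?_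
  rw [Rat.lt_iff] at h
  zify
  rw [a4, b4]
  exact h

/-- for `q, q' ∈ (0,1/2)` rational, `q ≤ q'` iff `c_{q'}0^∞ ≤₁ c_q 0^∞`; in
particular `q < q'` implies `c_q 0^∞ >₁ c_{q'} 0^∞`. -/
theorem nbt_tail_code_order (q q' : ℚ) (hq0 : 0 < q) (hq1 : q < 1 / 2)
    (hq'0 : 0 < q') (hq'1 : q' < 1 / 2) :
    (q ≤ q' ↔
      unimodalLE (wordSeq (nbtCodeQ q') zeroSeq) (wordSeq (nbtCodeQ q) zeroSeq)) ∧
    (q < q' →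
      unimodalGT (wordSeq (nbtCodeQ q) zeroSeq) (wordSeq (nbtCodeQ q') zeroSeq)) := by
  refine ⟨⟨fun h => ?_, fun h => ?_⟩, unimodalGT_nbtCodeQ hq0 hq1 hq'0 hq'1⟩
  · rcases h.lt_or_eq with h | rfl
    · exact Or.inr (unimodalGT_nbtCodeQ hq0 hq1 hq'0 hq'1 h)
    · exact Or.inl rfl
  · by_contra hlt
    have hgt := unimodalGT_nbtCodeQ hq'0 hq'1 hq0 hq1 (not_le.1 hlt)
    rcases h with h | h
    · rw [h] at hgt
      exact unimodalGT_asymm hgt hgt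
    · exact unimodalGT_asymm hgt h
end

section
/- Let w = w₁⋯w_M (with M ≥ 1) be a maximal decoration which is even. Then for every i with 1 ≤ i ≤ M, the shifted periodic sequence σ^i((w1)^∞) is strictly less than the sequence w 0 1 0^∞ in the unimodal order. (Consequently every point of the shift-orbit of (w1)^∞ other than (w1)^∞ itself lies to the left of w010^∞, which is the stable boundary of the pruning region 𝒫_w.) -/
lemma periodicSeq_snoc_lt (w : List Bool) (b : Bool) {n : ℕ} (h : n < w.length) :
    periodicSeq (w ++ [b]) n = w.getD n false := by
  have : n % (w.length + 1) = n := Nat.mod_eq_of_lt (by omega)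
  simp [periodicSeq, this, List.getElem?_append_left h]

lemma periodicSeq_snoc_length (w : List Bool) (b : Bool) :
    periodicSeq (w ++ [b]) w.length = b := by
  have : w.length % (w.length + 1) = w.length := Nat.mod_eq_of_lt (by omega)
  simp [periodicSeq, this]

lemma periodicSeq_snoc_add (w : List Bool) (b : Bool) (n : ℕ) :
    periodicSeq (w ++ [b]) (n + (w.length + 1)) = periodicSeq (w ++ [b]) n := by
  simp [periodicSeq]

lemma wordSeq_lt (w t : List Bool) {n : ℕ} (h : n < w.length) :
    wordSeq (w ++ t) zeroSeq n = w.getD n false := by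
  have h' : n < (w ++ t).length := by simp; omega
  simp only [wordSeq, h', dite_true]
  simp [List.getElem_append_left h, h]

/-- The unimodal order with the parity expressed through `Nat.count`. -/
lemma unimodalGT_iff (s t : ℕ → Bool) : unimodalGT s t ↔
    ∃ k : ℕ, (∀ i < k, s i = t i) ∧ s k ≠ t k ∧
      (Even (Nat.count (fun n => s n = true) k) ↔ s k = true) := by
  unfold unimodalGT
  refine exists_congr fun k => and_congr_right fun _ => and_congr_right fun h => ?_
  rw [Nat.count_eq_card_filter_range]
  split_ifs with he <;> revert h <;> simp only [he] <;> cases s k <;> cases t k <;> simp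

lemma count_congr_lt {p q : ℕ → Prop} [DecidablePred p] [DecidablePred q] {n : ℕ}
    (h : ∀ k < n, p k ↔ q k) : Nat.count p n = Nat.count q n := by
  induction n with
  | zero => simp
  | succ n ih =>
    rw [Nat.count_succ, Nat.count_succ, ih fun k hk => h k (by omega)]
    simp only [h n (by omega)]

lemma count_getD (w : List Bool) :
    Nat.count (fun n => w.getD n false = true) w.length = w.count true := by
  induction w with
  | nil => simp
  | cons b w ih =>
    rw [List.length_cons, Nat.count_succ', List.count_cons]
    simp only [List.getD_cons_succ, List.getD_cons_zero, ih]
    cases b <;> simp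

lemma count_periodicSeq (w : List Bool) (b : Bool) :
    Nat.count (fun n => periodicSeq (w ++ [b]) n = true) w.length = w.count true := by
  rw [← count_getD]
  exact count_congr_lt fun k hk => by rw [periodicSeq_snoc_lt w b hk]

/-- If `σ^i A` agrees with `A = (w1)^∞` on the first `M` symbols, then they are equal: the remaining
symbol of the period is determined by the number of `1`s in a window of length `M + 1`. -/
lemma shift_eq_of_agree (w : List Bool) (i : ℕ)
    (h : ∀ n < w.length, periodicSeq (w ++ [true]) (n + i) = periodicSeq (w ++ [true]) n) (n : ℕ) :
    periodicSeq (w ++ [true]) (n + i) = periodicSeq (w ++ [true]) n := by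
  have hper := periodicSeq_snoc_add w true
  have hlast := periodicSeq_snoc_length w true
  generalize periodicSeq (w ++ [true]) = a at *
  have h1 := Nat.count_add (fun n => a n = true) i (w.length + 1)
  have h2 := Nat.count_add (fun n => a n = true) (w.length + 1) i
  have h3 : Nat.count (fun k => a (w.length + 1 + k) = true) i
      = Nat.count (fun n => a n = true) i :=
    count_congr_lt fun k _ => by rw [add_comm, hper]
  have h4 : Nat.count (fun k => a (i + k) = true) w.length
      = Nat.count (fun n => a n = true) w.length :=
    count_congr_lt fun k hk => by rw [add_comm, h k hk]
  rw [add_comm, h2, h3, Nat.count_succ, Nat.count_succ, h4, if_pos hlast] at h1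
  have h5 : a (w.length + i) = true := by
    rw [add_comm]
    by_contra hc
    rw [if_neg hc] at h1
    omega
  induction n using Nat.strong_induction_on with
  | _ n ih =>
    rcases lt_trichotomy n w.length with hn | hn | hn
    · exact h n hn
    · rw [hn, h5, hlast]
    · obtain ⟨m, rfl⟩ : ∃ m, n = m + (w.length + 1) := ⟨n - (w.length + 1), by omega⟩
      rw [hper, add_right_comm, hper, ih m (by omega)]

/-- If `(w1)^∞` has period `i`, maximality of `w0` controls the parity of its prefix of length
`M + 1 - i`. -/
lemma odd_count_prefix (w : List Bool) (hmax : maximalCode (w ++ [false])) (i : ℕ) (h1 : 1 ≤ i)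
    (hi : i ≤ w.length)
    (h : ∀ n, periodicSeq (w ++ [true]) (n + i) = periodicSeq (w ++ [true]) n) :
    Odd (Nat.count (fun n => periodicSeq (w ++ [true]) n = true) (w.length + 1 - i)) := by
  have hlast := periodicSeq_snoc_length w true
  have hlast0 := periodicSeq_snoc_length w false
  have hagree : ∀ n < w.length,
      periodicSeq (w ++ [false]) n = periodicSeq (w ++ [true]) n := fun n hn => by
    rw [periodicSeq_snoc_lt w _ hn, periodicSeq_snoc_lt w _ hn]
  have hm := hmax i h1
  rw [unimodalLE, unimodalGT_iff] at hm
  generalize periodicSeq (w ++ [true]) = a at *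
  generalize periodicSeq (w ++ [false]) = c at *
  obtain ⟨m, hmi⟩ : ∃ m, w.length = m + i := ⟨w.length - i, by omega⟩
  have ham : a m = true := by rw [← h m, ← hmi, hlast]
  have hcm : c m = true := by rw [hagree m (by omega), ham]
  have hcmi : c (m + i) = false := by rw [← hmi, hlast0]
  have hlt : ∀ j < m, c (j + i) = c j := fun j hj => by
    rw [hagree _ (by omega), hagree _ (by omega), h]
  rw [show w.length + 1 - i = m + 1 by omega, Nat.count_succ, if_pos ham]
  refine Even.add_one ?_
  rcases hm with hm | ⟨k, hk, hne, hev⟩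
  · have := congrFun hm m
    simp only [hcm, hcmi] at this
    cases this
  · -- the first difference between `c` and its shift is exactly at `m`
    have hkm : k = m := by
      rcases lt_trichotomy k m with hk' | hk' | hk'
      · exact absurd (hlt k hk').symm hne
      · exact hk'
      · have := hk m hk'
        simp only [hcm, hcmi] at this
        cases this
    subst hkm
    rw [count_congr_lt (q := fun n => c n = true) fun j hj => by rw [hagree j (by omega)]]
    exact hev.2 hcm

lemma not_periodic (w : List Bool) (hmax : maximalCode (w ++ [false]))
    (heven : Even (w.count true)) (i : ℕ) (h1 : 1 ≤ i) (hi : i ≤ w.length)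
    (h : ∀ n, periodicSeq (w ++ [true]) (n + i) = periodicSeq (w ++ [true]) n) : False := by
  have o1 := odd_count_prefix w hmax i h1 hi h
  have o2 := odd_count_prefix w hmax (w.length + 1 - i) (by omega) (by omega) fun n => by
    rw [← h, show n + (w.length + 1 - i) + i = n + (w.length + 1) by omega, periodicSeq_snoc_add]
  rw [show w.length + 1 - (w.length + 1 - i) = i by omega] at o2
  have hadd := Nat.count_add (fun n => periodicSeq (w ++ [true]) n = true) i (w.length + 1 - i)
  rw [show i + (w.length + 1 - i) = w.length + 1 by omega, Nat.count_succ, count_periodicSeq,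
    if_pos (periodicSeq_snoc_length w true),
    count_congr_lt (q := fun n => periodicSeq (w ++ [true]) n = true)
      (p := fun k => periodicSeq (w ++ [true]) (i + k) = true)
      fun k _ => by rw [add_comm, h]] at hadd
  have := o2.add_odd o1
  rw [← hadd] at this
  exact (Nat.not_even_iff_odd.2 heven.add_one) this


/-- if `w` is an even maximal decoration of length `M ≥ 1`, then for every
`1 ≤ i ≤ M`, the shifted periodic sequence `σ^i((w1)^∞)` is strictly `<₁` the sequence
`w 0 1 0^∞`. -/
theorem shifted_w1_lt_w010 (w : List Bool) (hM : 1 ≤ w.length)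
    (hmax : maximalDecoration w) (heven : Even (w.count true)) :
    ∀ i : ℕ, 1 ≤ i → i ≤ w.length →
      unimodalGT (wordSeq (w ++ [false, true]) zeroSeq)
        (fun n => periodicSeq (w ++ [true]) (n + i)) := by
  intro i h1 hi
  have hm := hmax.2 i h1
  rw [unimodalLE, unimodalGT_iff] at hm
  rw [unimodalGT_iff]
  rcases hm with hm | ⟨k, hk, hne, hev⟩
  · exact (not_periodic w hmax.1 heven i h1 hi fun n => congrFun hm n).elim
  · rcases lt_or_ge k w.length with hkM | hkM
    · have hB : ∀ n ≤ k, wordSeq (w ++ [false, true]) zeroSeq n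
          = periodicSeq (w ++ [true]) n := fun n hn => by
        rw [wordSeq_lt w _ (by omega), periodicSeq_snoc_lt w _ (by omega)]
      refine ⟨k, fun j hj => by rw [hB j hj.le, hk j hj], by rwa [hB k le_rfl], ?_⟩
      rw [hB k le_rfl, ← hev]
      rw [count_congr_lt fun j hj => by rw [hB j hj.le]]
    · exact (not_periodic w hmax.1 heven i h1 hi (shift_eq_of_agree w i fun n hn =>
        (hk n (by omega)).symm)).elim
end
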